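/- arXiv:2603.26381 — 2 statements merged into one kernel-verified Lean document; each statement's English description precedes it below -/
import Mathlib

section
/- Let (E_k)_{k≥0} be a sequence of nonnegative real numbers with E_1 = E_0, let a_1, a_2, a_3 be real numbers with a_2 ≥ 0, a_1 + a_2 < 1, at least one of a_1, a_2 positive, and a_3 > 0, and let c : ℕ → Bool be a choice function such that for every k ≥ 1: if c(k) = false then E_{k+1} ≤ a_1 E_k + a_2 E_{k−1}, and if c(k) = true then E_{k+1} ≤ a_3 E_k. For k ≥ 1 let t_k denote the number of indices j with 1 ≤ j ≤ k and c(j) = true. Then for all k ≥ 1, E_{k+1} ≤ q^{k − t_k} (a_3 + ξ)^{t_k} (1 + ξ) E_0, where q := (a_1 + √(a_1² + 4 a_2))/2 and ξ := q − a_1. -/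
/-!
Write `q` and `-ξ` for the roots of `X² - a₁ X - a₂`, so that `a₁ = q - ξ` and `a₂ = q ξ`, and
follow the quantity `V k = E k + ξ E (k - 1)`. The two-term recurrence factors as
`V (k + 1) ≤ q V k`, while the one-step bound, weakened by a nonnegative multiple of `E (k - 1)`,
gives `V (k + 1) ≤ (a₃ + ξ) V k`. Multiplying the factors over the steps bounds `V (k + 1)`,
which dominates `E (k + 1)`.
-/

open Finset

/-- The larger root of `X² - a X - b` (when `0 ≤ b`, so that the roots are real): the growth rate
of the recurrence `x (n + 2) = a * x (n + 1) + b * x n`. The other root is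
`a - dominantRoot a b`. -/
noncomputable def dominantRoot (a b : ℝ) : ℝ := (a + √(a ^ 2 + 4 * b)) / 2

section DominantRoot

variable {b : ℝ}

lemma dominantRoot_nonneg (a : ℝ) (hb : 0 ≤ b) : 0 ≤ dominantRoot a b := by
  have neg_sqrt_le : -√(a ^ 2 + 4 * b) ≤ a := Real.neg_sqrt_le_of_sq_le (by linarith)
  unfold dominantRoot
  linarith

lemma le_dominantRoot (a : ℝ) (hb : 0 ≤ b) : a ≤ dominantRoot a b := by
  have le_sqrt : a ≤ √(a ^ 2 + 4 * b) := Real.le_sqrt_of_sq_le (by linarith)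
  unfold dominantRoot
  linarith

lemma dominantRoot_mul_sub (a : ℝ) (hb : 0 ≤ b) :
    dominantRoot a b * (dominantRoot a b - a) = b := by
  have sq_sqrt : √(a ^ 2 + 4 * b) ^ 2 = a ^ 2 + 4 * b := Real.sq_sqrt (by positivity)
  unfold dominantRoot
  linear_combination sq_sqrt / 4

end DominantRoot

lemma prod_ite_const {ι M : Type*} [CommMonoid M] (s : Finset ι) (p : ι → Prop)
    [DecidablePred p] (x y : M) :
    ∏ i ∈ s, (if p i then x else y) = x ^ #{i ∈ s | p i} * y ^ (#s - #{i ∈ s | p i}) := by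
  rw [prod_ite, prod_const, prod_const, ← card_filter_add_card_filter_not (s := s) p,
    Nat.add_sub_cancel_left]

section OrderedRing

variable {R : Type*} [CommRing R] [PartialOrder R] [IsOrderedRing R]

lemma add_mul_le_of_le_two_term {q ξ x y z : R} (h : z ≤ (q - ξ) * y + q * ξ * x) :
    z + ξ * y ≤ q * (y + ξ * x) :=
  calc
    z + ξ * y ≤ (q - ξ) * y + q * ξ * x + ξ * y := by gcongr
    _ = q * (y + ξ * x) := by ring

lemma add_mul_le_of_le_one_step {a ξ x y z : R} (hξ : 0 ≤ ξ) (haξ : 0 ≤ a + ξ) (hx : 0 ≤ x)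
    (h : z ≤ a * y) : z + ξ * y ≤ (a + ξ) * (y + ξ * x) :=
  calc
    z + ξ * y ≤ a * y + ξ * y := by gcongr
    _ = (a + ξ) * y := by ring
    _ ≤ (a + ξ) * (y + ξ * x) := by
      gcongr
      exact le_add_of_nonneg_right (mul_nonneg hξ hx)

lemma le_mul_pow_mul_pow_of_le_ite {V : ℕ → R} {p : ℕ → Prop} [DecidablePred p] {r s : R}
    (hr : 0 ≤ r) (hs : 0 ≤ s) (hV : ∀ k ≥ 1, V (k + 1) ≤ (if p k then r else s) * V k) (k : ℕ) :
    V (k + 1) ≤ V 1 * (r ^ #{j ∈ Icc 1 k | p j} * s ^ (k - #{j ∈ Icc 1 k | p j})) := by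
  have factor_nonneg (j : ℕ) : 0 ≤ if p j then r else s := by split_ifs <;> assumption
  have gronwall : V (k + 1) ≤ V 1 * ∏ j ∈ Icc 1 k, if p j then r else s := by
    simpa [Ico_add_one_right_eq_Icc] using
      discrete_gronwall_prod_general (b := 0) (by simpa using hV) (fun j _ ↦ factor_nonneg j)
        (Nat.le_add_left 1 k)
  simpa only [prod_ite_const, Nat.card_Icc, Nat.add_sub_cancel] using gronwall

theorem stmt2_general {E : ℕ → R} (hE : ∀ k, 0 ≤ E k) {a₁ a₂ a₃ q ξ : R} (ha₁ : a₁ = q - ξ)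
    (ha₂ : a₂ = q * ξ) (hq : 0 ≤ q) (hξ : 0 ≤ ξ) (ha₃ : 0 ≤ a₃ + ξ)
    {p : ℕ → Prop} [DecidablePred p]
    (two_term : ∀ k ≥ 1, ¬p k → E (k + 1) ≤ a₁ * E k + a₂ * E (k - 1))
    (one_step : ∀ k ≥ 1, p k → E (k + 1) ≤ a₃ * E k) (k : ℕ) :
    E (k + 1) ≤ q ^ (k - #{j ∈ Icc 1 k | p j}) * (a₃ + ξ) ^ #{j ∈ Icc 1 k | p j} *
      (E 1 + ξ * E 0) := by
  subst ha₁ ha₂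
  let V (k : ℕ) : R := E k + ξ * E (k - 1)
  have V_succ_le (k : ℕ) (hk : k ≥ 1) : V (k + 1) ≤ (if p k then a₃ + ξ else q) * V k := by
    split_ifs with hp
    · exact add_mul_le_of_le_one_step hξ ha₃ (hE _) (one_step k hk hp)
    · exact add_mul_le_of_le_two_term (two_term k hk hp)
  calc
    E (k + 1) ≤ V (k + 1) := le_add_of_nonneg_right (mul_nonneg hξ (hE _))
    _ ≤ V 1 * ((a₃ + ξ) ^ #{j ∈ Icc 1 k | p j} * q ^ (k - #{j ∈ Icc 1 k | p j})) :=
      le_mul_pow_mul_pow_of_le_ite ha₃ hq V_succ_le k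
    _ = q ^ (k - #{j ∈ Icc 1 k | p j}) * (a₃ + ξ) ^ #{j ∈ Icc 1 k | p j} *
        (E 1 + ξ * E 0) := by ring

end OrderedRing

/-- Hybrid recurrence estimate: a nonnegative sequence which at each step `k ≥ 1`
satisfies either the two-term recurrence inequality (when `c k = false`) or the
one-step contraction (when `c k = true`) obeys
`E_{k+1} ≤ q^{k-t_k} (a₃+ξ)^{t_k} (1+ξ) E₀`, where `t_k` counts the one-step cases. -/
theorem stmt2 (E : ℕ → ℝ) (hEnonneg : ∀ k, 0 ≤ E k) (hE10 : E 1 = E 0)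
    (a1 a2 a3 : ℝ) (ha2 : 0 ≤ a2) (hsum : a1 + a2 < 1) (hpos : 0 < a1 ∨ 0 < a2)
    (ha3 : 0 < a3) (c : ℕ → Bool)
    (hrecF : ∀ k, 1 ≤ k → c k = false → E (k + 1) ≤ a1 * E k + a2 * E (k - 1))
    (hrecT : ∀ k, 1 ≤ k → c k = true → E (k + 1) ≤ a3 * E k) :
    ∀ k, 1 ≤ k →
      E (k + 1) ≤
        ((a1 + Real.sqrt (a1 ^ 2 + 4 * a2)) / 2) ^
            (k - ((Finset.Icc 1 k).filter (fun j => c j = true)).card) *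
          (a3 + ((a1 + Real.sqrt (a1 ^ 2 + 4 * a2)) / 2 - a1)) ^
            ((Finset.Icc 1 k).filter (fun j => c j = true)).card *
          (1 + ((a1 + Real.sqrt (a1 ^ 2 + 4 * a2)) / 2 - a1)) * E 0 := by
  have hξ := sub_nonneg.2 (le_dominantRoot a1 ha2)
  intro k _
  simpa only [dominantRoot, hE10, ← one_add_mul, ← mul_assoc] using
    stmt2_general hEnonneg (sub_sub_cancel _ a1).symm (dominantRoot_mul_sub a1 ha2).symm
      (dominantRoot_nonneg a1 ha2) hξ (add_nonneg ha3.le hξ)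
      (fun j hj hc ↦ hrecF j hj (Bool.eq_false_of_not_eq_true hc)) hrecT k
end

section
/- Let G : ℝⁿ → ℝᵐ be differentiable at a ∈ ℝⁿ with derivative A := G'(a), let x_* ∈ ℝⁿ satisfy G(x_*) = 0, let η ∈ (0, 1/2), γ ∈ (0, 1], K ≥ 1, β_max > 0, and σ := ‖A‖ (operator norm). Assume: ‖G(a) − A(a − x_*)‖ ≤ η ‖G(a)‖; ‖G(a)‖² ≥ ‖A(a − x_*)‖²/(1 + η²); ‖A(a − x_*)‖² ≥ (σ²/K²) ‖a − x_*‖². Let b ∈ ℝⁿ, v := a − b, u := A^*(G(a)), assume Δ := ‖u‖²‖v‖² − ⟨u, v⟩² > 0 and s := Δ/(‖u‖²‖v‖²) ≤ γ, let β := ⟨v, u⟩ ‖G(a)‖²/Δ and assume 0 ≤ β ≤ β_max, and set x⁺ := a − (‖v‖² ‖G(a)‖²/Δ) u + β v. Then ‖x⁺ − x_*‖² ≤ b₁ ‖a − x_*‖² + b₂ ‖b − x_*‖², where b₁ := 1 + 3β_max + 2β_max² − (1 − 2ηγ)/((1 + η²) K² γ²) and b₂ := 2β_max² + β_max. -/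
open scoped RealInnerProductSpace

/-!
With `e = a - x⋆`, `f = b - x⋆` and `v = e - f`, the new error is the heavy-ball point `e + β v`
corrected by `-α u`. The step sizes solve `⟪α u - β v, u⟫ = ρ := ‖G a‖²`, so expanding the square
and inserting the cone bound `(1 - η) ρ ≤ ⟪u, e⟫` gives
`‖e + β v - α u‖² ≤ ‖e + β v‖² - (1 - 2 η s) ‖α u‖²`, where `α ‖u‖² = ρ / s`.
The first term is `‖(1 + β) e - β f‖²`, whose cross term is absorbed by `‖e + f‖² ≥ 0`; the second
is bounded below by `‖u‖ ≤ ‖A‖ ‖G a‖` and the conditioning of `A` along `e`.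
-/

section StepSizes

variable {E : Type*} [NormedAddCommGroup E] [InnerProductSpace ℝ E] {u v : E}

/-- The Gram determinant of the pair `u, v`, written `Δ` in the theorem. -/
noncomputable def gramDet (u v : E) : ℝ :=
  ‖u‖ ^ 2 * ‖v‖ ^ 2 - ⟪u, v⟫ ^ 2

/-- The squared sine of the angle between `u` and `v`, written `s` in the theorem; it is `0` by
convention if one of the vectors vanishes. -/
noncomputable def sinSqAngle (u v : E) : ℝ :=
  gramDet u v / (‖u‖ ^ 2 * ‖v‖ ^ 2)

/-- The adaptive step size along the gradient direction `-u`, for the squared residual norm `ρ` and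
the previous displacement `v`. Meaningful only if `u` and `v` are linearly independent. -/
noncomputable def gradientStepSize (ρ : ℝ) (u v : E) : ℝ :=
  ‖v‖ ^ 2 * ρ / gramDet u v

/-- The adaptive momentum coefficient along the previous displacement `v`, written `β` in the
theorem. Meaningful only if `u` and `v` are linearly independent. -/
noncomputable def momentumCoeff (ρ : ℝ) (u v : E) : ℝ :=
  ⟪v, u⟫ * ρ / gramDet u v

theorem left_ne_zero_of_gramDet_pos (h : 0 < gramDet u v) : u ≠ 0 := by
  rintro rfl
  simp [gramDet] at h

theorem right_ne_zero_of_gramDet_pos (h : 0 < gramDet u v) : v ≠ 0 := by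
  rintro rfl
  simp [gramDet] at h

theorem sinSqAngle_pos (h : 0 < gramDet u v) : 0 < sinSqAngle u v := by
  have hu := left_ne_zero_of_gramDet_pos h
  have hv := right_ne_zero_of_gramDet_pos h
  unfold sinSqAngle
  positivity

theorem gradientStepSize_nonneg {ρ : ℝ} (hρ : 0 ≤ ρ) (h : 0 < gramDet u v) :
    0 ≤ gradientStepSize ρ u v := by
  unfold gradientStepSize
  positivity

theorem gradientStepSize_eq_div (ρ : ℝ) (h : 0 < gramDet u v) :
    gradientStepSize ρ u v = ρ / (sinSqAngle u v * ‖u‖ ^ 2) := by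
  have hu := norm_ne_zero_iff.2 (left_ne_zero_of_gramDet_pos h)
  have hv := norm_ne_zero_iff.2 (right_ne_zero_of_gramDet_pos h)
  unfold gradientStepSize sinSqAngle
  field_simp

theorem gradientStepSize_mul_sub_momentumCoeff_mul (ρ : ℝ) (h : 0 < gramDet u v) :
    gradientStepSize ρ u v * ‖u‖ ^ 2 - momentumCoeff ρ u v * ⟪u, v⟫ = ρ := by
  have hnum : ‖v‖ ^ 2 * ρ * ‖u‖ ^ 2 - ⟪v, u⟫ * ρ * ⟪u, v⟫ = ρ * gramDet u v := by
    rw [real_inner_comm u v, gramDet]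
    ring
  rw [gradientStepSize, momentumCoeff, div_mul_eq_mul_div, div_mul_eq_mul_div, ← sub_div, hnum,
    mul_div_cancel_right₀ ρ h.ne']

end StepSizes

section HeavyBall

variable {E : Type*} [NormedAddCommGroup E] [InnerProductSpace ℝ E]

theorem norm_add_smul_sub_sq_le (e f : E) {β : ℝ} (hβ : 0 ≤ β) :
    ‖e + β • (e - f)‖ ^ 2 ≤
      (1 + 3 * β + 2 * β ^ 2) * ‖e‖ ^ 2 + (2 * β ^ 2 + β) * ‖f‖ ^ 2 := by
  have hcross : -(2 * ⟪e, f⟫) ≤ ‖e‖ ^ 2 + ‖f‖ ^ 2 := by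
    linarith [norm_add_sq_real e f, sq_nonneg ‖e + f‖]
  calc ‖e + β • (e - f)‖ ^ 2
      = ‖(1 + β) • e - β • f‖ ^ 2 := by congr 2; module
    _ = (1 + β) ^ 2 * ‖e‖ ^ 2 + β ^ 2 * ‖f‖ ^ 2 + β * (1 + β) * -(2 * ⟪e, f⟫) := by
      rw [norm_sub_sq_real, real_inner_smul_left, real_inner_smul_right, norm_smul, norm_smul,
        mul_pow, mul_pow, Real.norm_eq_abs, Real.norm_eq_abs, sq_abs, sq_abs]
      ring
    _ ≤ (1 + β) ^ 2 * ‖e‖ ^ 2 + β ^ 2 * ‖f‖ ^ 2 + β * (1 + β) * (‖e‖ ^ 2 + ‖f‖ ^ 2) := by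
      gcongr
    _ = (1 + 3 * β + 2 * β ^ 2) * ‖e‖ ^ 2 + (2 * β ^ 2 + β) * ‖f‖ ^ 2 := by ring

theorem norm_add_smul_sub_smul_sq_le {e u v : E} {α β ρ η : ℝ} (hα : 0 ≤ α)
    (hρ : α * ‖u‖ ^ 2 - β * ⟪u, v⟫ = ρ) (hue : (1 - η) * ρ ≤ ⟪u, e⟫) :
    ‖e + β • v - α • u‖ ^ 2 ≤ ‖e + β • v‖ ^ 2 - α * (α * ‖u‖ ^ 2 - 2 * η * ρ) := by
  calc ‖e + β • v - α • u‖ ^ 2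
      = ‖e + β • v‖ ^ 2 - 2 * α * (⟪u, e⟫ + β * ⟪u, v⟫) + α * (α * ‖u‖ ^ 2) := by
        rw [norm_sub_sq_real, real_inner_comm, real_inner_smul_left, inner_add_right,
          real_inner_smul_right, norm_smul, mul_pow, Real.norm_eq_abs, sq_abs]
        ring
    _ ≤ ‖e + β • v‖ ^ 2 - 2 * α * ((1 - η) * ρ + β * ⟪u, v⟫) + α * (α * ‖u‖ ^ 2) := by
      gcongr
    _ = ‖e + β • v‖ ^ 2 - α * (α * ‖u‖ ^ 2 - 2 * η * ρ) := by
      rw [← hρ]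
      ring

theorem norm_momentum_step_sq_le {e u v : E} {ρ η : ℝ} (hρ : 0 ≤ ρ) (h : 0 < gramDet u v)
    (hue : (1 - η) * ρ ≤ ⟪u, e⟫) :
    ‖e + momentumCoeff ρ u v • v - gradientStepSize ρ u v • u‖ ^ 2 ≤
      ‖e + momentumCoeff ρ u v • v‖ ^ 2 -
        (1 - 2 * η * sinSqAngle u v) / sinSqAngle u v ^ 2 * (ρ ^ 2 / ‖u‖ ^ 2) := by
  have hu := norm_ne_zero_iff.2 (left_ne_zero_of_gramDet_pos h)
  have hs := (sinSqAngle_pos h).ne'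
  have hdecrease : gradientStepSize ρ u v * (gradientStepSize ρ u v * ‖u‖ ^ 2 - 2 * η * ρ) =
      (1 - 2 * η * sinSqAngle u v) / sinSqAngle u v ^ 2 * (ρ ^ 2 / ‖u‖ ^ 2) := by
    rw [gradientStepSize_eq_div ρ h]
    field_simp
  rw [← hdecrease]
  exact norm_add_smul_sub_smul_sq_le (gradientStepSize_nonneg hρ h)
    (gradientStepSize_mul_sub_momentumCoeff_mul ρ h) hue

end HeavyBall

section Conditioning

variable {E F : Type*} [SeminormedAddCommGroup E] [NormedSpace ℝ E]
  [SeminormedAddCommGroup F] [NormedSpace ℝ F]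

theorem opNorm_sq_mul_norm_sq_le {A : E →L[ℝ] F} {e : E} {r : F} {p k : ℝ} (hp : 0 < p)
    (hk : 0 < k) (hresidual : ‖A e‖ ^ 2 / p ≤ ‖r‖ ^ 2)
    (hsingular : ‖A‖ ^ 2 / k * ‖e‖ ^ 2 ≤ ‖A e‖ ^ 2) :
    ‖A‖ ^ 2 * ‖e‖ ^ 2 ≤ p * k * ‖r‖ ^ 2 := by
  rw [div_le_iff₀ hp] at hresidual
  rw [div_mul_eq_mul_div, div_le_iff₀ hk] at hsingular
  calc ‖A‖ ^ 2 * ‖e‖ ^ 2 ≤ ‖A e‖ ^ 2 * k := hsingular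
    _ ≤ ‖r‖ ^ 2 * p * k := by gcongr
    _ = p * k * ‖r‖ ^ 2 := by ring

end Conditioning

section Adjoint

variable {E F : Type*} [NormedAddCommGroup E] [InnerProductSpace ℝ E] [CompleteSpace E]
  [NormedAddCommGroup F] [InnerProductSpace ℝ F] [CompleteSpace F]
  {A : E →L[ℝ] F} {e : E} {r : F}

theorem one_sub_mul_norm_sq_le_inner_adjoint {η : ℝ} (hcone : ‖r - A e‖ ≤ η * ‖r‖) :
    (1 - η) * ‖r‖ ^ 2 ≤ ⟪ContinuousLinearMap.adjoint A r, e⟫ := by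
  have hdefect : ⟪r, r - A e⟫ ≤ η * ‖r‖ ^ 2 :=
    calc ⟪r, r - A e⟫ ≤ ‖r‖ * ‖r - A e‖ := real_inner_le_norm _ _
      _ ≤ ‖r‖ * (η * ‖r‖) := by gcongr
      _ = η * ‖r‖ ^ 2 := by ring
  rw [inner_sub_right, real_inner_self_eq_norm_sq] at hdefect
  rw [ContinuousLinearMap.adjoint_inner_left]
  linarith

theorem norm_sq_div_le_of_opNorm_sq_mul_le {c : ℝ} (hc : 0 < c)
    (hu : ContinuousLinearMap.adjoint A r ≠ 0) (hcond : ‖A‖ ^ 2 * ‖e‖ ^ 2 ≤ c * ‖r‖ ^ 2) :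
    ‖e‖ ^ 2 / c ≤ (‖r‖ ^ 2) ^ 2 / ‖ContinuousLinearMap.adjoint A r‖ ^ 2 := by
  have hadjoint : ‖ContinuousLinearMap.adjoint A r‖ ≤ ‖A‖ * ‖r‖ := by
    simpa only [LinearIsometryEquiv.norm_map] using (ContinuousLinearMap.adjoint A).le_opNorm r
  rw [div_le_div_iff₀ hc (by positivity)]
  calc ‖e‖ ^ 2 * ‖ContinuousLinearMap.adjoint A r‖ ^ 2
      ≤ ‖e‖ ^ 2 * (‖A‖ * ‖r‖) ^ 2 := by gcongr
    _ = ‖A‖ ^ 2 * ‖e‖ ^ 2 * ‖r‖ ^ 2 := by ring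
    _ ≤ c * ‖r‖ ^ 2 * ‖r‖ ^ 2 := by gcongr
    _ = (‖r‖ ^ 2) ^ 2 * c := by ring

end Adjoint

theorem one_sub_mul_div_sq_anti {η s γ : ℝ} (hη : 0 ≤ η) (hs : 0 < s) (hsγ : s ≤ γ)
    (hηγ : 2 * η * γ ≤ 1) :
    (1 - 2 * η * γ) / γ ^ 2 ≤ (1 - 2 * η * s) / s ^ 2 := by
  have hnonneg : 0 ≤ 1 - 2 * η * s := by
    linarith [mul_le_mul_of_nonneg_left hsγ hη]
  gcongr

theorem stmt11_general {E F : Type*}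
    [NormedAddCommGroup E] [InnerProductSpace ℝ E] [CompleteSpace E]
    [NormedAddCommGroup F] [InnerProductSpace ℝ F] [CompleteSpace F]
    {A : E →L[ℝ] F} {r : F} {a b x u v : E} {η γ c βmax : ℝ}
    (hη : 0 ≤ η) (hηγ : 2 * η * γ ≤ 1) (hc : 0 < c)
    (hcone : ‖r - A (a - x)‖ ≤ η * ‖r‖)
    (hcond : ‖A‖ ^ 2 * ‖a - x‖ ^ 2 ≤ c * ‖r‖ ^ 2)
    (hv : v = a - b) (hu : u = ContinuousLinearMap.adjoint A r)
    (hΔ : 0 < gramDet u v) (hsγ : sinSqAngle u v ≤ γ)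
    (hβ0 : 0 ≤ momentumCoeff (‖r‖ ^ 2) u v) (hββ : momentumCoeff (‖r‖ ^ 2) u v ≤ βmax) :
    ‖a - gradientStepSize (‖r‖ ^ 2) u v • u + momentumCoeff (‖r‖ ^ 2) u v • v - x‖ ^ 2 ≤
      (1 + 3 * βmax + 2 * βmax ^ 2 - (1 - 2 * η * γ) / (c * γ ^ 2)) * ‖a - x‖ ^ 2 +
        (2 * βmax ^ 2 + βmax) * ‖b - x‖ ^ 2 := by
  have hue : (1 - η) * ‖r‖ ^ 2 ≤ ⟪u, a - x⟫ :=
    hu ▸ one_sub_mul_norm_sq_le_inner_adjoint hcone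
  have hstep := norm_momentum_step_sq_le (sq_nonneg ‖r‖) hΔ hue
  have herror : ‖a - x‖ ^ 2 / c ≤ (‖r‖ ^ 2) ^ 2 / ‖u‖ ^ 2 := by
    have hu0 := left_ne_zero_of_gramDet_pos hΔ
    subst hu
    exact norm_sq_div_le_of_opNorm_sq_mul_le hc hu0 hcond
  have hrate := one_sub_mul_div_sq_anti hη (sinSqAngle_pos hΔ) hsγ hηγ
  set s := sinSqAngle u v
  set β := momentumCoeff (‖r‖ ^ 2) u v
  set α := gradientStepSize (‖r‖ ^ 2) u v
  have hdecrease : (1 - 2 * η * γ) / γ ^ 2 * (‖a - x‖ ^ 2 / c) ≤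
      (1 - 2 * η * s) / s ^ 2 * ((‖r‖ ^ 2) ^ 2 / ‖u‖ ^ 2) :=
    mul_le_mul hrate herror (by positivity)
      ((div_nonneg (sub_nonneg.2 hηγ) (sq_nonneg γ)).trans hrate)
  calc ‖a - α • u + β • v - x‖ ^ 2
      = ‖a - x + β • v - α • u‖ ^ 2 := by congr 2; abel
    _ ≤ ‖a - x + β • v‖ ^ 2 - (1 - 2 * η * γ) / γ ^ 2 * (‖a - x‖ ^ 2 / c) := by linarith
    _ = ‖a - x + β • (a - x - (b - x))‖ ^ 2 -
        (1 - 2 * η * γ) / γ ^ 2 * (‖a - x‖ ^ 2 / c) := by rw [sub_sub_sub_cancel_right, hv]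
    _ ≤ (1 + 3 * β + 2 * β ^ 2) * ‖a - x‖ ^ 2 + (2 * β ^ 2 + β) * ‖b - x‖ ^ 2 -
        (1 - 2 * η * γ) / γ ^ 2 * (‖a - x‖ ^ 2 / c) := by
      gcongr
      exact norm_add_smul_sub_sq_le _ _ hβ0
    _ ≤ (1 + 3 * βmax + 2 * βmax ^ 2) * ‖a - x‖ ^ 2 + (2 * βmax ^ 2 + βmax) * ‖b - x‖ ^ 2 -
        (1 - 2 * η * γ) / γ ^ 2 * (‖a - x‖ ^ 2 / c) := by gcongr
    _ = (1 + 3 * βmax + 2 * βmax ^ 2 - (1 - 2 * η * γ) / (c * γ ^ 2)) * ‖a - x‖ ^ 2 +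
        (2 * βmax ^ 2 + βmax) * ‖b - x‖ ^ 2 := by
      ring

/-- One-step contraction estimate for the adaptive-momentum average block
nonlinear Kaczmarz iterate under the tangential cone and condition-number
bounds: `‖x⁺ - x⋆‖² ≤ b₁ ‖a - x⋆‖² + b₂ ‖b - x⋆‖²`. -/
theorem stmt11 {n m : ℕ}
    (G : EuclideanSpace ℝ (Fin n) → EuclideanSpace ℝ (Fin m))
    (a : EuclideanSpace ℝ (Fin n))
    (A : EuclideanSpace ℝ (Fin n) →L[ℝ] EuclideanSpace ℝ (Fin m))
    (hA : HasFDerivAt G A a)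
    (xstar : EuclideanSpace ℝ (Fin n)) (hxstar : G xstar = 0)
    (η γ K βmax : ℝ) (hη0 : 0 < η) (hη : η < 1 / 2)
    (hγ0 : 0 < γ) (hγ1 : γ ≤ 1) (hK : 1 ≤ K) (hβmax : 0 < βmax)
    (σ : ℝ) (hσ : σ = ‖A‖)
    (hcone : ‖G a - A (a - xstar)‖ ≤ η * ‖G a‖)
    (hlow : ‖A (a - xstar)‖ ^ 2 / (1 + η ^ 2) ≤ ‖G a‖ ^ 2)
    (hsv : (σ ^ 2 / K ^ 2) * ‖a - xstar‖ ^ 2 ≤ ‖A (a - xstar)‖ ^ 2)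
    (b : EuclideanSpace ℝ (Fin n))
    (v u : EuclideanSpace ℝ (Fin n))
    (hv : v = a - b) (hu : u = ContinuousLinearMap.adjoint A (G a))
    (Δ : ℝ) (hΔdef : Δ = ‖u‖ ^ 2 * ‖v‖ ^ 2 - ⟪u, v⟫ ^ 2) (hΔ : 0 < Δ)
    (s : ℝ) (hs : s = Δ / (‖u‖ ^ 2 * ‖v‖ ^ 2)) (hsγ : s ≤ γ)
    (β : ℝ) (hβdef : β = ⟪v, u⟫ * ‖G a‖ ^ 2 / Δ)
    (hβ0 : 0 ≤ β) (hββ : β ≤ βmax)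
    (xplus : EuclideanSpace ℝ (Fin n))
    (hxplus : xplus = a - (‖v‖ ^ 2 * ‖G a‖ ^ 2 / Δ) • u + β • v) :
    ‖xplus - xstar‖ ^ 2 ≤
      (1 + 3 * βmax + 2 * βmax ^ 2 - (1 - 2 * η * γ) / ((1 + η ^ 2) * K ^ 2 * γ ^ 2)) *
          ‖a - xstar‖ ^ 2 +
        (2 * βmax ^ 2 + βmax) * ‖b - xstar‖ ^ 2 := by
  subst hσ hΔdef hs hβdef hxplus
  exact stmt11_general hη0.le (by nlinarith) (by positivity) hcone
    (opNorm_sq_mul_norm_sq_le (by positivity) (by positivity) hlow hsv)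
    hv hu hΔ hsγ hβ0 hββ
end
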